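/- Let α > 1 and u(x,y) = −((x+1)² + (y+1)²)^{(1−α)/2} on the open square (0,1)². Then D²u has one positive and one negative eigenvalue, and u satisfies the Pucci equation α λ⁺ + λ⁻ = 0, where λ⁺ and λ⁻ denote the positive and negative eigenvalues of D²u. -/

import Mathlib

noncomputable def pxx (u : ℝ → ℝ → ℝ) (x y : ℝ) : ℝ := deriv (deriv (fun s => u s y)) x
noncomputable def pyy (u : ℝ → ℝ → ℝ) (x y : ℝ) : ℝ := deriv (deriv (u x)) y
noncomputable def pxy (u : ℝ → ℝ → ℝ) (x y : ℝ) : ℝ :=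
  deriv (fun s => deriv (fun t => u s t) y) x

/-- Hessian of `u : ℝ → ℝ → ℝ` as a 2×2 matrix. -/
noncomputable def hess2 (u : ℝ → ℝ → ℝ) (x y : ℝ) : Matrix (Fin 2) (Fin 2) ℝ :=
  !![pxx u x y, pxy u x y; pxy u x y, pyy u x y]

lemma hd_aux (b c s : ℝ) (hb : 0 < b) :
    HasDerivAt (fun s : ℝ => ((s + 1) ^ 2 + b) ^ c)
      (2 * c * (s + 1) * ((s + 1) ^ 2 + b) ^ (c - 1)) s := by
  have h1 : HasDerivAt (fun s : ℝ => (s + 1) ^ 2 + b) (2 * (s + 1)) s := by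
    have := (((hasDerivAt_id s).add_const (1 : ℝ)).pow 2).add_const b
    simpa using this
  have hne : (s + 1) ^ 2 + b ≠ 0 := by positivity
  have h2 := h1.rpow_const (p := c) (Or.inl hne)
  convert h2 using 1
  ring

lemma d1_aux (b c : ℝ) (hb : 0 < b) :
    deriv (fun s : ℝ => -(((s + 1) ^ 2 + b) ^ c)) =
      fun s => -(2 * c * (s + 1) * ((s + 1) ^ 2 + b) ^ (c - 1)) := by
  funext s
  exact (hd_aux b c s hb).neg.deriv

lemma d2_aux (b c s : ℝ) (hb : 0 < b) :
    deriv (deriv (fun s : ℝ => -(((s + 1) ^ 2 + b) ^ c))) s =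
      -(2 * c * ((s + 1) ^ 2 + b + 2 * (c - 1) * (s + 1) ^ 2)) *
        ((s + 1) ^ 2 + b) ^ (c - 2) := by
  rw [d1_aux b c hb]
  have h1 : HasDerivAt (fun s : ℝ => 2 * c * (s + 1)) (2 * c) s := by
    simpa using ((hasDerivAt_id s).add_const (1 : ℝ)).const_mul (2 * c)
  have h2 := (h1.mul (hd_aux b (c - 1) s hb)).neg
  refine h2.deriv.trans ?_
  have hR : 0 < (s + 1) ^ 2 + b := by positivity
  have e : ((s + 1) ^ 2 + b) ^ (c - 1) = ((s + 1) ^ 2 + b) ^ (c - 2) * ((s + 1) ^ 2 + b) := by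
    rw [← Real.rpow_add_one hR.ne']
    congr 1
    ring
  have e2 : c - 1 - 1 = c - 2 := by ring
  rw [e2, e]
  ring

/-- for `α > 1` and `u(x,y) = −((x+1)²+(y+1)²)^((1−α)/2)` on `(0,1)²`,
the Hessian has one positive and one negative eigenvalue `λ⁺, λ⁻`, and the Pucci
equation `α λ⁺ + λ⁻ = 0` holds. -/
theorem pucci_exact_solution (α : ℝ) (hα : 1 < α)
    (u : ℝ → ℝ → ℝ)
    (hu : ∀ x y, u x y = -(((x + 1) ^ 2 + (y + 1) ^ 2) ^ ((1 - α) / 2))) :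
    ∀ x y : ℝ, x ∈ Set.Ioo (0 : ℝ) 1 → y ∈ Set.Ioo (0 : ℝ) 1 →
      ∃ lpos lneg : ℝ, 0 < lpos ∧ lneg < 0 ∧
        α * lpos + lneg = 0 ∧
        (∀ t : ℝ, (hess2 u x y - t • (1 : Matrix (Fin 2) (Fin 2) ℝ)).det = 0 ↔
          (t = lpos ∨ t = lneg)) := by
  intro x y hx hy
  have hX : 0 < x + 1 := by linarith [hx.1]
  have hY : 0 < y + 1 := by linarith [hy.1]
  have hX2 : 0 < (x + 1) ^ 2 := by positivity
  have hY2 : 0 < (y + 1) ^ 2 := by positivity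
  have hR : 0 < (x + 1) ^ 2 + (y + 1) ^ 2 := by positivity
  have hswap : ∀ s, u s = fun t => -(((t + 1) ^ 2 + (s + 1) ^ 2) ^ ((1 - α) / 2)) := by
    intro s
    funext t
    rw [hu, add_comm]
  have hxx0 : pxx u x y =
      deriv (deriv (fun s : ℝ => -(((s + 1) ^ 2 + (y + 1) ^ 2) ^ ((1 - α) / 2)))) x := by
    unfold pxx
    simp only [hu]
  have hxx := hxx0.trans (d2_aux ((y + 1) ^ 2) ((1 - α) / 2) x hY2)
  clear hxx0
  have hyy0 : pyy u x y =
      deriv (deriv (fun s : ℝ => -(((s + 1) ^ 2 + (x + 1) ^ 2) ^ ((1 - α) / 2)))) y := by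
    unfold pyy
    rw [hswap]
  have hyy := hyy0.trans (d2_aux ((x + 1) ^ 2) ((1 - α) / 2) y hX2)
  clear hyy0
  have hin : (fun s => deriv (fun t => u s t) y) = fun s =>
      -(2 * ((1 - α) / 2) * (y + 1)) * ((s + 1) ^ 2 + (y + 1) ^ 2) ^ ((1 - α) / 2 - 1) := by
    funext s
    have hne : (s + 1) ^ 2 + (y + 1) ^ 2 ≠ 0 := by positivity
    have h1 : HasDerivAt (fun t : ℝ => (s + 1) ^ 2 + (t + 1) ^ 2) (2 * (y + 1)) y := by
      have := (((hasDerivAt_id y).add_const (1 : ℝ)).pow 2).const_add ((s + 1) ^ 2)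
      simpa using this
    have h2 := (h1.rpow_const (p := (1 - α) / 2) (Or.inl hne)).neg
    simp only [hu]
    refine h2.deriv.trans ?_
    ring
  have hxy0 : pxy u x y = deriv (fun s =>
      -(2 * ((1 - α) / 2) * (y + 1)) * ((s + 1) ^ 2 + (y + 1) ^ 2) ^ ((1 - α) / 2 - 1)) x := by
    unfold pxy
    rw [hin]
  have hxy := hxy0.trans
    ((hd_aux ((y + 1) ^ 2) ((1 - α) / 2 - 1) x hY2).const_mul _).deriv
  clear hxy0
  have e2 : (1 - α) / 2 - 1 - 1 = (1 - α) / 2 - 2 := by ring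
  rw [e2] at hxy
  rw [add_comm ((y + 1) ^ 2) ((x + 1) ^ 2)] at hyy
  have hP : 0 < ((x + 1) ^ 2 + (y + 1) ^ 2) ^ ((1 - α) / 2 - 2) := Real.rpow_pos_of_pos hR _
  generalize ((x + 1) ^ 2 + (y + 1) ^ 2) ^ ((1 - α) / 2 - 2) = P at *
  have ha : 0 < α - 1 := by linarith
  have hl : 0 < (α - 1) * P * ((x + 1) ^ 2 + (y + 1) ^ 2) := by positivity
  refine ⟨(α - 1) * P * ((x + 1) ^ 2 + (y + 1) ^ 2),
    -(α * ((α - 1) * P * ((x + 1) ^ 2 + (y + 1) ^ 2))), hl, ?_, by ring, ?_⟩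
  · have : 0 < α * ((α - 1) * P * ((x + 1) ^ 2 + (y + 1) ^ 2)) := by positivity
    linarith
  · intro t
    have hdet : (hess2 u x y - t • (1 : Matrix (Fin 2) (Fin 2) ℝ)).det =
        (t - (α - 1) * P * ((x + 1) ^ 2 + (y + 1) ^ 2)) *
        (t - -(α * ((α - 1) * P * ((x + 1) ^ 2 + (y + 1) ^ 2)))) := by
      rw [Matrix.det_fin_two]
      simp [hess2, hxx, hyy, hxy]
      ring
    rw [hdet, mul_eq_zero, sub_eq_zero, sub_eq_zero]
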